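/- arXiv:2604.13212 — 2 statements merged into one kernel-verified Lean document; each statement's English description precedes it below -/
import Mathlib

section
/- For k ∈ ℕ and j ∈ {3,4}: if the k-core of a graph G is ST^(j)-(s,t)-degenerate for integers s ≥ 0 and t ≥ 1 with s ≥ (k−1)t, then G is ST^(j)-(s,t)-degenerate. -/
/-!
Peel `G` down to its `k`-core by deleting vertices with fewer than `k` remaining neighbours, and put
these vertices back in the reverse order. When `v` is put back, first run the old sequence and then
operate on `v` alone, saving nothing. Each neighbour `w` of `v` is operated on exactly `T w` times
before it leaves the graph, so `v` loses at most one unit of shield for each unit of target of its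
at most `k - 1` neighbours, and `S v` covers this loss. The only new operations have `W = ∅`, so
restricted sequences stay restricted.
-/

open scoped Classical

noncomputable section

namespace StrictDeg

/-- The state of the `ShadeSave` process: the active vertex set (the vertex set of the
current induced subgraph), the current shield, and the current target. -/
structure State (V : Type) where
  A : Finset V
  S : V → ℕ
  T : V → ℕ

variable {V : Type}

/-- The output of the operation `ShadeSave(G[A], S, T, u, W)`. -/
def applyStep (G : SimpleGraph V) (st : State V) (u : V) (W : Finset V) : State V where
  A := if st.T u = 1 then st.A.erase u else st.A
  S := fun v => if G.Adj u v ∧ v ∈ st.A ∧ v ∉ W then st.S v - 1 else st.S v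
  T := fun v => if v = u ∧ 1 < st.T u then st.T u - 1 else st.T v

/-- Legality of the operation `ShadeSave(G[A], S, T, u, W)`:  `u` is a vertex of the current
graph, `W` is a set of neighbors of `u` in the current graph,
`S u + T u > ∑_{w ∈ W} (S w + T w)`, and the output shield is nonnegative (in `ℕ` terms:
every neighbor of `u` in the current graph that is not saved has shield value at least 1). -/
def LegalStep (G : SimpleGraph V) (st : State V) (u : V) (W : Finset V) : Prop :=
  u ∈ st.A ∧
  (∀ w ∈ W, w ∈ st.A ∧ G.Adj u w) ∧
  (∑ w ∈ W, (st.S w + st.T w)) < st.S u + st.T u ∧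
  (∀ v ∈ st.A, G.Adj u v → v ∉ W → 1 ≤ st.S v)

/-- `LegalSeq G st l` means `l` is a legal sequence of `ShadeSave` operations starting
from the state `st`. -/
def LegalSeq (G : SimpleGraph V) : State V → List (V × Finset V) → Prop
  | _, [] => True
  | st, op :: rest => LegalStep G st op.1 op.2 ∧ LegalSeq G (applyStep G st op.1 op.2) rest

/-- The final state after applying the operations in `l` in order. -/
def finalState (G : SimpleGraph V) (st : State V) (l : List (V × Finset V)) : State V :=
  l.foldl (fun s op => applyStep G s op.1 op.2) st

/-- The induced subgraph of `G` on `A`, with shield `S` and target `T`, admits a complete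
legal sequence, i.e. it is `ST⁽³⁾`-`(S,T)`-degenerate. -/
def ST3DegOn (G : SimpleGraph V) (A : Finset V) (S T : V → ℕ) : Prop :=
  ∃ l : List (V × Finset V),
    LegalSeq G ⟨A, S, T⟩ l ∧ (finalState G ⟨A, S, T⟩ l).A = ∅

/-- The induced subgraph of `G` on `A`, with shield `S` and target `T`, admits a complete
restricted (every operation saves on at most one vertex) legal sequence, i.e. it is
`ST⁽⁴⁾`-`(S,T)`-degenerate. -/
def ST4DegOn (G : SimpleGraph V) (A : Finset V) (S T : V → ℕ) : Prop :=
  ∃ l : List (V × Finset V),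
    LegalSeq G ⟨A, S, T⟩ l ∧ (∀ op ∈ l, op.2.card ≤ 1) ∧
      (finalState G ⟨A, S, T⟩ l).A = ∅

/-- `G` is `ST⁽³⁾`-`(S,T)`-degenerate. -/
def ST3Deg [Fintype V] (G : SimpleGraph V) (S T : V → ℕ) : Prop :=
  ST3DegOn G Finset.univ S T

/-- `G` is `ST⁽⁴⁾`-`(S,T)`-degenerate. -/
def ST4Deg [Fintype V] (G : SimpleGraph V) (S T : V → ℕ) : Prop :=
  ST4DegOn G Finset.univ S T

/-- The fractional strict type-3 degeneracy
`ST⁽³⁾*(G) = inf {(s+t)/t : G is ST⁽³⁾-(s,t)-degenerate}`. -/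
def ST3Star [Fintype V] (G : SimpleGraph V) : ℝ :=
  sInf { x : ℝ | ∃ s t : ℕ, 1 ≤ t ∧ ST3Deg G (fun _ => s) (fun _ => t) ∧
    x = ((s : ℝ) + t) / t }

/-- The fractional strict type-4 degeneracy
`ST⁽⁴⁾*(G) = inf {(s+t)/t : G is ST⁽⁴⁾-(s,t)-degenerate}`. -/
def ST4Star [Fintype V] (G : SimpleGraph V) : ℝ :=
  sInf { x : ℝ | ∃ s t : ℕ, 1 ≤ t ∧ ST4Deg G (fun _ => s) (fun _ => t) ∧
    x = ((s : ℝ) + t) / t }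

/-- A cover `𝓗 = (L, H)` of the graph `G`. -/
structure Cover (G : SimpleGraph V) where
  /-- The vertex type of the cover graph `H`. -/
  U : Type
  fin : Fintype U
  /-- The cover graph. -/
  H : SimpleGraph U
  /-- The lists: `L v` is the part of the partition of `V(H)` corresponding to `v`. -/
  L : V → Finset U
  part : ∀ x : U, ∃! v : V, x ∈ L v
  indep : ∀ v : V, ∀ x ∈ L v, ∀ y ∈ L v, ¬ H.Adj x y
  cross : ∀ u v : V, ∀ x ∈ L u, ∀ y ∈ L v, H.Adj x y → G.Adj u v
  matching : ∀ u v : V, G.Adj u v → ∀ x ∈ L u, ∀ y ∈ L v, ∀ y' ∈ L v,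
      H.Adj x y → H.Adj x y' → y = y'

/-- `G` is `(𝓗, b)`-colorable: there is an independent set of the cover graph meeting
every list in at least `b` vertices. -/
def Cover.Colorable {G : SimpleGraph V} (C : Cover G) (b : ℕ) : Prop :=
  ∃ I : Finset C.U, (∀ x ∈ I, ∀ y ∈ I, ¬ C.H.Adj x y) ∧ ∀ v : V, b ≤ (I ∩ C.L v).card

/-- `G` is `(a,b)`-DP-colorable. -/
def DPColorable (G : SimpleGraph V) (a b : ℕ) : Prop :=
  ∀ C : Cover G, (∀ v : V, (C.L v).card = a) → C.Colorable b

/-- The fractional DP-chromatic number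
`χ*_DP(G) = inf {a/b : G is (a,b)-DP-colorable}`. -/
def DPStar (G : SimpleGraph V) : ℝ :=
  sInf { x : ℝ | ∃ a b : ℕ, 1 ≤ b ∧ b ≤ a ∧ DPColorable G a b ∧ x = (a : ℝ) / b }

/-- `G` is `(F₁, F₂)`-DP-colorable. -/
def DPColorableFn (G : SimpleGraph V) (F₁ F₂ : V → ℕ) : Prop :=
  ∀ C : Cover G, (∀ v : V, (C.L v).card = F₁ v) →
    ∃ I : Finset C.U, (∀ x ∈ I, ∀ y ∈ I, ¬ C.H.Adj x y) ∧
      ∀ v : V, (I ∩ C.L v).card = F₂ v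


/-- The vertex set of the `k`-core of `G`: the union of all vertex sets `A` such that every
vertex of `A` has at least `k` neighbors in `A`; equivalently, the vertex set of the maximal
subgraph of `G` of minimum degree at least `k`. -/
def kCore {V : Type} [Fintype V] (G : SimpleGraph V) (k : ℕ) : Finset V :=
  Finset.univ.filter fun v => ∃ A : Finset V,
    (∀ u ∈ A, k ≤ (A.filter (G.Adj u)).card) ∧ v ∈ A

/-- The current graph can be emptied by legal operations whose saved sets `W` all satisfy `P`. This
treats both kinds of degeneracy at once: `P` is trivial for `ST⁽³⁾` and says `|W| ≤ 1` for
`ST⁽⁴⁾`. -/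
inductive Clearable (G : SimpleGraph V) (P : Finset V → Prop) : State V → Prop
  | empty {st : State V} (hA : st.A = ∅) : Clearable G P st
  | step {st : State V} {u : V} {W : Finset V} (hstep : LegalStep G st u W) (hW : P W)
      (hrest : Clearable G P (applyStep G st u W)) : Clearable G P st

/-- The number of operations still to be performed on the current neighbours of `v`. -/
def State.demand (G : SimpleGraph V) (st : State V) (v : V) : ℕ :=
  ∑ w ∈ st.A with G.Adj v w, st.T w

/-- The state `st` with a further vertex `v` of shield `s` and target `t` in its graph; the old
values of `st.S` and `st.T` at `v` are overwritten. -/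
def State.insertVertex (st : State V) (v : V) (s t : ℕ) : State V where
  A := insert v st.A
  S := Function.update st.S v s
  T := Function.update st.T v t

section Clearable

variable {G : SimpleGraph V} {P : Finset V → Prop} {st : State V} {S T : V → ℕ} {A W : Finset V}
  {u v : V} {s t : ℕ}

theorem clearable_iff_exists_legalSeq :
    Clearable G P st ↔
      ∃ l, LegalSeq G st l ∧ (∀ op ∈ l, P op.2) ∧ (finalState G st l).A = ∅ := by
  constructor
  · intro h
    induction h with
    | empty hA => exact ⟨[], trivial, List.forall_mem_nil _, hA⟩
    | @step st u W hstep hW _ ih =>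
      obtain ⟨l, hl, hP, hfin⟩ := ih
      exact ⟨(u, W) :: l, ⟨hstep, hl⟩, List.forall_mem_cons.2 ⟨hW, hP⟩, hfin⟩
  · rintro ⟨l, hl, hP, hfin⟩
    induction l generalizing st with
    | nil => exact .empty hfin
    | cons op l ih =>
      obtain ⟨hW, hP⟩ := List.forall_mem_cons.1 hP
      exact .step hl.1 hW (ih hl.2 hP hfin)

theorem st3DegOn_iff_clearable :
    ST3DegOn G A S T ↔ Clearable G (fun _ => True) ⟨A, S, T⟩ := by
  simp [clearable_iff_exists_legalSeq, ST3DegOn]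

theorem st4DegOn_iff_clearable :
    ST4DegOn G A S T ↔ Clearable G (fun W => W.card ≤ 1) ⟨A, S, T⟩ :=
  (clearable_iff_exists_legalSeq (P := fun W => W.card ≤ 1)).symm

theorem applyStep_target_self_of_ne_one (hu : st.T u ≠ 1) :
    (applyStep G st u W).T u = st.T u - 1 := by
  simp only [applyStep, true_and]
  split_ifs <;> omega

theorem applyStep_target_of_ne (hv : v ≠ u) : (applyStep G st u W).T v = st.T v := by
  simp [applyStep, hv]

theorem applyStep_target_le (v : V) : (applyStep G st u W).T v ≤ st.T v := by
  obtain rfl | hv := eq_or_ne v u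
  · by_cases hT : st.T v = 1
    · simp [applyStep, hT]
    · exact (applyStep_target_self_of_ne_one hT).trans_le (Nat.sub_le _ _)
  · exact (applyStep_target_of_ne hv).le

theorem applyStep_subset : (applyStep G st u W).A ⊆ st.A := by
  simp only [applyStep]
  split_ifs
  · exact st.A.erase_subset u
  · exact subset_rfl

theorem mem_applyStep_of_target_ne_one (hv : v ∈ st.A) (hT : st.T v ≠ 1) :
    v ∈ (applyStep G st u W).A := by
  simp only [applyStep]
  split_ifs with hu
  · exact Finset.mem_erase.2 ⟨fun hvu => hT (hvu ▸ hu), hv⟩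
  · exact hv

-- A vertex of target `0` would never leave the graph.
theorem Clearable.target_pos (h : Clearable G P st) (hv : v ∈ st.A) : 1 ≤ st.T v := by
  induction h with
  | empty hA => simp [hA] at hv
  | @step st _ _ _ _ _ ih =>
    by_cases hT : st.T v = 1
    · exact hT.ge
    · exact (ih (mem_applyStep_of_target_ne_one hv hT)).trans (applyStep_target_le v)

theorem sum_target_applyStep (p : V → Prop) (hu : u ∈ st.A) (hpos : 1 ≤ st.T u) :
    ∑ w ∈ (applyStep G st u W).A with p w, (applyStep G st u W).T w + (if p u then 1 else 0) =
      ∑ w ∈ st.A with p w, st.T w := by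
  have hrest : ∑ w ∈ st.A.erase u, (if p w then (applyStep G st u W).T w else 0) =
      ∑ w ∈ st.A.erase u, if p w then st.T w else 0 :=
    Finset.sum_congr rfl fun w hw => by rw [applyStep_target_of_ne (Finset.ne_of_mem_erase hw)]
  rw [Finset.sum_filter, Finset.sum_filter, ← Finset.add_sum_erase st.A _ hu]
  by_cases hTu : st.T u = 1
  · have hA : (applyStep G st u W).A = st.A.erase u := if_pos hTu
    rw [hA, hrest, hTu, add_comm]
  · have hA : (applyStep G st u W).A = st.A := if_neg hTu
    rw [hA, ← Finset.add_sum_erase st.A _ hu, hrest, applyStep_target_self_of_ne_one hTu]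
    split_ifs <;> omega

theorem demand_applyStep_add (hu : u ∈ st.A) (hpos : 1 ≤ st.T u) :
    (applyStep G st u W).demand G v + (if G.Adj u v then 1 else 0) = st.demand G v := by
  simpa only [State.demand, G.adj_comm u v] using sum_target_applyStep (G.Adj v) hu hpos

theorem one_le_demand (hu : u ∈ st.A) (hpos : 1 ≤ st.T u) (huv : G.Adj u v) :
    1 ≤ st.demand G v :=
  hpos.trans <| Finset.single_le_sum (f := st.T) (fun _ _ => Nat.zero_le _)
    (Finset.mem_filter.2 ⟨hu, huv.symm⟩)

theorem applyStep_insertVertex (hu : u ≠ v) (hv : v ∉ W) :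
    applyStep G (st.insertVertex v s t) u W =
      (applyStep G st u W).insertVertex v (s - if G.Adj u v then 1 else 0) t := by
  simp only [applyStep, State.insertVertex, State.mk.injEq, Function.update_of_ne hu]
  refine ⟨?_, funext fun w => ?_, funext fun w => ?_⟩
  · split_ifs
    · exact Finset.erase_insert_of_ne hu.symm
    · rfl
  · obtain rfl | hw := eq_or_ne w v
    · by_cases huw : G.Adj u w <;> simp [hv, huw]
    · simp [hw]
  · obtain rfl | hw := eq_or_ne w v
    · simp [hu.symm]
    · simp [hw]

theorem LegalStep.insertVertex (h : LegalStep G st u W) (hv : v ∉ st.A)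
    (hs : G.Adj u v → 1 ≤ s) : LegalStep G (st.insertVertex v s t) u W := by
  obtain ⟨hu, hW, hsum, hshield⟩ := h
  have ne_v : ∀ w ∈ st.A, w ≠ v := fun w hw => ne_of_mem_of_not_mem hw hv
  have hS : ∀ w ∈ st.A, (st.insertVertex v s t).S w = st.S w :=
    fun w hw => Function.update_of_ne (ne_v w hw) _ _
  have hT : ∀ w ∈ st.A, (st.insertVertex v s t).T w = st.T w :=
    fun w hw => Function.update_of_ne (ne_v w hw) _ _
  refine ⟨Finset.mem_insert_of_mem hu,
    fun w hw => ⟨Finset.mem_insert_of_mem (hW w hw).1, (hW w hw).2⟩, ?_, fun w hw huw hwW => ?_⟩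
  · rw [hS u hu, hT u hu, Finset.sum_congr rfl fun w hw => by
      rw [hS w (hW w hw).1, hT w (hW w hw).1]]
    exact hsum
  · obtain rfl | hw := Finset.mem_insert.1 hw
    · simpa [State.insertVertex] using hs huw
    · exact (hshield w hw huw hwW).trans_eq (hS w hw).symm

theorem legalStep_empty_of_eq_singleton (hA : st.A = {v}) (ht : 1 ≤ st.T v) :
    LegalStep G st v ∅ := by
  refine ⟨by simp [hA], by simp, by rw [Finset.sum_empty]; omega, fun w hw hvw _ => ?_⟩
  rw [hA, Finset.mem_singleton] at hw
  exact absurd hw.symm hvw.ne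

theorem clearable_of_eq_singleton (hP : P ∅) (hA : st.A = {v}) (ht : 1 ≤ st.T v) :
    Clearable G P st := by
  induction hn : st.T v generalizing st with
  | zero => omega
  | succ n ih =>
    refine .step (legalStep_empty_of_eq_singleton hA ht) hP ?_
    obtain rfl | hpos := n.eq_zero_or_pos
    · exact .empty (by simp [applyStep, hn, hA])
    · have hne : st.T v ≠ 1 := by omega
      have hT : (applyStep G st v ∅).T v = n := by
        rw [applyStep_target_self_of_ne_one hne, hn, Nat.add_sub_cancel]
      exact ih ((if_neg hne).trans hA) (hpos.trans_eq hT.symm) hT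

theorem Clearable.insertVertex (h : Clearable G P st) (hP : P ∅) (hv : v ∉ st.A)
    (hs : st.demand G v ≤ s) (ht : 1 ≤ t) : Clearable G P (st.insertVertex v s t) := by
  induction h generalizing s with
  | empty hA =>
    exact clearable_of_eq_singleton (v := v) hP (by simp [State.insertVertex, hA])
      (by simpa [State.insertVertex] using ht)
  | @step st u W hstep hW hrest ih =>
    have hu : u ∈ st.A := hstep.1
    have hpos : 1 ≤ st.T u := (Clearable.step hstep hW hrest).target_pos hu
    have hvW : v ∉ W := fun hvW => hv (hstep.2.1 v hvW).1
    refine .step (hstep.insertVertex hv fun huv => (one_le_demand hu hpos huv).trans hs) hW ?_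
    rw [applyStep_insertVertex (ne_of_mem_of_not_mem hu hv) hvW]
    refine ih (fun hv' => hv (applyStep_subset hv')) ?_
    have hdemand := demand_applyStep_add (G := G) (W := W) (v := v) hu hpos
    omega

theorem Clearable.insert (h : Clearable G P ⟨A, S, T⟩) (hP : P ∅) (hv : v ∉ A)
    (hS : ∑ w ∈ A with G.Adj v w, T w ≤ S v) (hT : 1 ≤ T v) :
    Clearable G P ⟨insert v A, S, T⟩ := by
  simpa only [State.insertVertex, Function.update_eq_self] using h.insertVertex hP hv hS hT

end Clearable

theorem sum_le_of_card_le_of_mul_le {ι : Type*} {s : Finset ι} {f : ι → ℕ} {n b : ℕ}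
    (hs : s.card ≤ n) (hf : ∀ i ∈ s, n * f i ≤ b) : ∑ i ∈ s, f i ≤ b := by
  obtain rfl | hn := n.eq_zero_or_pos
  · simp [Finset.card_eq_zero.1 (Nat.le_zero.1 hs)]
  refine Nat.le_of_mul_le_mul_left ?_ hn
  calc n * ∑ i ∈ s, f i = ∑ i ∈ s, n * f i := Finset.mul_sum ..
    _ ≤ s.card * b := Finset.sum_le_card_nsmul s _ b hf
    _ ≤ n * b := Nat.mul_le_mul_right b hs

section kCore

variable [Fintype V] {G : SimpleGraph V} {k : ℕ} {A B : Finset V}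

theorem subset_kCore (hA : ∀ u ∈ A, k ≤ (A.filter (G.Adj u)).card) : A ⊆ kCore G k :=
  fun _ hv => Finset.mem_filter.2 ⟨Finset.mem_univ _, A, hA, hv⟩

theorem le_card_filter_adj_of_mem_kCore {v : V} (hv : v ∈ kCore G k) :
    k ≤ ((kCore G k).filter (G.Adj v)).card := by
  obtain ⟨-, A, hA, hvA⟩ := Finset.mem_filter.1 hv
  exact (hA v hvA).trans (Finset.card_le_card (Finset.filter_subset_filter _ (subset_kCore hA)))

theorem exists_card_filter_adj_lt_of_kCore_ssubset (hB : kCore G k ⊂ B) :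
    ∃ v ∈ B, v ∉ kCore G k ∧ (B.filter (G.Adj v)).card < k := by
  by_contra! hdeg
  refine hB.2 (subset_kCore fun u hu => ?_)
  by_cases huc : u ∈ kCore G k
  · exact (le_card_filter_adj_of_mem_kCore huc).trans
      (Finset.card_le_card (Finset.filter_subset_filter _ hB.1))
  · exact hdeg u hu huc

theorem kCore_induction {motive : Finset V → Prop} (core : motive (kCore G k))
    (insert : ∀ A, ∀ v ∉ A, v ∉ kCore G k → (A.filter (G.Adj v)).card < k → motive A →
      motive (insert v A))
    (hB : kCore G k ⊆ B) : motive B := by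
  induction B using Finset.strongInduction with
  | H B ih =>
    obtain rfl | hssub := hB.eq_or_ssubset
    · exact core
    obtain ⟨v, hvB, hvc, hdeg⟩ := exists_card_filter_adj_lt_of_kCore_ssubset hssub
    have hdeg' : ((B.erase v).filter (G.Adj v)).card < k :=
      (Finset.card_le_card (Finset.filter_subset_filter _ (B.erase_subset v))).trans_lt hdeg
    rw [← Finset.insert_erase hvB]
    exact insert _ v (B.notMem_erase v) hvc hdeg'
      (ih _ (Finset.erase_ssubset hvB) (Finset.subset_erase.2 ⟨hB, hvc⟩))

theorem Clearable.univ_of_kCore {P : Finset V → Prop} {S T : V → ℕ}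
    (h : Clearable G P ⟨kCore G k, S, T⟩) (hP : P ∅) (hT : ∀ v ∉ kCore G k, 1 ≤ T v)
    (hS : ∀ v ∉ kCore G k, ∀ w, G.Adj v w → (k - 1) * T w ≤ S v) :
    Clearable G P ⟨Finset.univ, S, T⟩ := by
  refine kCore_induction (motive := fun B => Clearable G P ⟨B, S, T⟩) h
    (fun A v hvA hvc hdeg hA => hA.insert hP hvA ?_ (hT v hvc)) (Finset.subset_univ _)
  exact sum_le_of_card_le_of_mul_le (Nat.le_sub_one_of_lt hdeg) fun w hw =>
    hS v hvc w (Finset.mem_filter.1 hw).2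

theorem stDeg_of_kCore_general {S T : V → ℕ} (hT : ∀ v ∉ kCore G k, 1 ≤ T v)
    (hS : ∀ v ∉ kCore G k, ∀ w, G.Adj v w → (k - 1) * T w ≤ S v) :
    (ST3DegOn G (kCore G k) S T → ST3Deg G S T) ∧
    (ST4DegOn G (kCore G k) S T → ST4Deg G S T) :=
  ⟨fun h => st3DegOn_iff_clearable.2 <|
      (st3DegOn_iff_clearable.1 h).univ_of_kCore trivial hT hS,
    fun h => st4DegOn_iff_clearable.2 <|
      (st4DegOn_iff_clearable.1 h).univ_of_kCore (Nat.zero_le 1) hT hS⟩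

end kCore

/-- For `k ∈ ℕ` and `j ∈ {3,4}`: if the `k`-core of a graph `G` is
`ST⁽ʲ⁾`-`(s,t)`-degenerate for integers `s ≥ 0` and `t ≥ 1` with `s ≥ (k−1)t`, then `G` is
`ST⁽ʲ⁾`-`(s,t)`-degenerate. -/
theorem stDeg_of_kCore {V : Type} [Fintype V] (G : SimpleGraph V)
    (k : ℕ) (hk : 1 ≤ k) (s t : ℕ) (ht : 1 ≤ t) (hst : (k - 1) * t ≤ s) :
    (ST3DegOn G (kCore G k) (fun _ => s) (fun _ => t) →
      ST3Deg G (fun _ => s) (fun _ => t)) ∧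
    (ST4DegOn G (kCore G k) (fun _ => s) (fun _ => t) →
      ST4Deg G (fun _ => s) (fun _ => t)) :=
  stDeg_of_kCore_general (fun _ _ => ht) fun _ _ _ _ => hst

end StrictDeg
end
end

section
/- Suppose G is a graph and X is an independent set of vertices in G such that X contains every vertex of G of degree at least 3, G − X is a linear forest (a disjoint union of paths, possibly empty), and the order of each component of G − X is at least 2r−1 for some r ∈ ℕ. Then G is ST^(4)-(r+1,r)-degenerate; consequently ST^(4)*(G) ≤ 2 + 1/r. -/
/-!
Give a vertex of degree `d` the shield `r * d + 1 - r`. Deleting a vertex by `r` operations that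
save nothing lowers the shield of each neighbour by `r` and its degree by one, so this shield is
preserved under deletions; at degree at most `2` it is at most `r + 1`. Hence one may delete `X`,
and then shorten every path of `G - X` from one end until its order is `2r - 1`.

On a path `0, 1, …, 2r - 2` it suffices to remove the odd vertices. In a first sweep, outward from
`0`, vertex `2i + 1` acts `r - 1 - i` times, saving `2i` and shading `2i + 2`; this exhausts the
shield of the last vertex. In a second sweep, back towards `0`, vertex `2i + 1` performs its
remaining `i + 1` operations, saving `2i + 2` and shading `2i`. An inner even vertex `2i` is shaded
`(r - i) + (i + 1) = r + 1` times in all, which is exactly its shield, and the two ends at most once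
each.
-/

open scoped Classical

noncomputable section

namespace StrictDeg

variable {V : Type}

variable {W A B : Finset V} {G : SimpleGraph V} {S S' T T' : V → ℕ} {u v : V} {r : ℕ}

theorem ST4DegOn.of_empty (G : SimpleGraph V) (S T : V → ℕ) : ST4DegOn G ∅ S T :=
  ⟨[], trivial, by simp, rfl⟩

theorem ST4DegOn.of_applyStep (hl : LegalStep G ⟨A, S, T⟩ u W) (hW : W.card ≤ 1)
    (h : ST4DegOn G (applyStep G ⟨A, S, T⟩ u W).A (applyStep G ⟨A, S, T⟩ u W).S
      (applyStep G ⟨A, S, T⟩ u W).T) : ST4DegOn G A S T := by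
  obtain ⟨l, hlegal, hcard, hfinal⟩ := h
  exact ⟨(u, W) :: l, ⟨hl, hlegal⟩, List.forall_mem_cons.2 ⟨hW, hcard⟩, hfinal⟩

@[elab_as_elim]
theorem ST4DegOn.induction {motive : ∀ A S T, ST4DegOn G A S T → Prop}
    (of_empty : ∀ S T, motive ∅ S T (.of_empty G S T))
    (of_applyStep : ∀ A S T u W (hl : LegalStep G ⟨A, S, T⟩ u W) (hW : W.card ≤ 1)
      (h : ST4DegOn G (applyStep G ⟨A, S, T⟩ u W).A (applyStep G ⟨A, S, T⟩ u W).S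
        (applyStep G ⟨A, S, T⟩ u W).T), motive _ _ _ h → motive A S T (.of_applyStep hl hW h))
    (h : ST4DegOn G A S T) : motive A S T h := by
  obtain ⟨l, hlegal, hcard, hfinal⟩ := h
  induction l generalizing A S T with
  | nil =>
    obtain rfl : A = ∅ := hfinal
    exact of_empty S T
  | cons op l ih =>
    rw [List.forall_mem_cons] at hcard
    exact of_applyStep A S T op.1 op.2 hlegal.1 hcard.1 ⟨l, hlegal.2, hcard.2, hfinal⟩
      (ih hlegal.2 hcard.2 hfinal)

theorem applyStep_A_subset (G : SimpleGraph V) (st : State V) (u : V) (W : Finset V) :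
    (applyStep G st u W).A ⊆ st.A := by
  unfold applyStep
  split_ifs
  exacts [Finset.erase_subset _ _, Finset.Subset.refl _]

theorem ST4DegOn.mono (h : ST4DegOn G A S T) (hS : ∀ v ∈ A, S v ≤ S' v)
    (hT : ∀ v ∈ A, T v = T' v) : ST4DegOn G A S' T' := by
  induction h using ST4DegOn.induction generalizing S' T' with
  | of_empty => exact .of_empty ..
  | of_applyStep A S T u W hl hW _ ih =>
    obtain ⟨hu, hWA, hsum, hpos⟩ := hl
    -- Vertices whose shields exceed the ones being simulated are shaded rather than saved.
    set W' := W.filter fun w => S w = S' w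
    have hTu : T u = T' u := hT u hu
    have hl' : LegalStep G ⟨A, S', T'⟩ u W' := by
      refine ⟨hu, fun w hw => hWA w (Finset.mem_of_mem_filter w hw), ?_, fun v hv hadj hvW' => ?_⟩
      · have hsum' : ∑ w ∈ W', (S' w + T' w) ≤ ∑ w ∈ W, (S w + T w) := by
          rw [Finset.sum_congr rfl fun w hw => by
            rw [← (Finset.mem_filter.1 hw).2, ← hT w (hWA w (Finset.mem_of_mem_filter w hw)).1]]
          exact Finset.sum_le_sum_of_subset (Finset.filter_subset _ _)
        have := hS u hu
        dsimp only at hsum ⊢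
        omega
      · have := hS v hv
        by_cases hvW : v ∈ W
        · have : S v ≠ S' v := fun h => hvW' (Finset.mem_filter.2 ⟨hvW, h⟩)
          dsimp only
          omega
        · exact (hpos v hv hadj hvW).trans this
    have hA : (applyStep G ⟨A, S', T'⟩ u W').A = (applyStep G ⟨A, S, T⟩ u W).A := by
      simp only [applyStep, hTu]
    refine .of_applyStep hl' ((Finset.card_filter_le _ _).trans hW) (hA ▸ ih ?_ ?_)
    all_goals
      intro v hv
      have hvA := applyStep_A_subset _ _ _ _ hv
    · have := hS v hvA
      have : v ∈ W' ↔ v ∈ W ∧ S v = S' v := Finset.mem_filter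
      simp only [applyStep]
      split_ifs <;> grind
    · simp only [applyStep, hTu, hT v hvA]

theorem ST4DegOn.congr (h : ST4DegOn G A S T) (hS : ∀ v ∈ A, S v = S' v)
    (hT : ∀ v ∈ A, T v = T' v) : ST4DegOn G A S' T' :=
  h.mono (fun v hv => (hS v hv).le) hT

theorem ST4DegOn.image {V' : Type} {G' : SimpleGraph V'} {f : V → V'} {S' T' : V' → ℕ}
    (hf : Set.InjOn f A) (hG : ∀ a ∈ A, ∀ b ∈ A, G'.Adj (f a) (f b) ↔ G.Adj a b)
    (h : ST4DegOn G A S T) (hS : ∀ a ∈ A, S a = S' (f a)) (hT : ∀ a ∈ A, T a = T' (f a)) :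
    ST4DegOn G' (A.image f) S' T' := by
  induction h using ST4DegOn.induction generalizing S' T' with
  | of_empty => exact .of_empty ..
  | of_applyStep A S T u W hl hW _ ih =>
    obtain ⟨hu, hWA, hsum, hpos⟩ := hl
    have hmemW : ∀ a ∈ A, f a ∈ W.image f ↔ a ∈ W := fun a ha =>
      ⟨fun h => by
        obtain ⟨w, hw, hwa⟩ := Finset.mem_image.1 h
        exact hf (hWA w hw).1 ha hwa ▸ hw, Finset.mem_image_of_mem f⟩
    have hl' : LegalStep G' ⟨A.image f, S', T'⟩ (f u) (W.image f) := by
      refine ⟨Finset.mem_image_of_mem f hu, Finset.forall_mem_image.2 fun w hw => ?_, ?_,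
        Finset.forall_mem_image.2 fun v hv hadj hvW => ?_⟩
      · exact ⟨Finset.mem_image_of_mem f (hWA w hw).1, (hG _ hu _ (hWA w hw).1).2 (hWA w hw).2⟩
      · dsimp only at hsum ⊢
        rw [Finset.sum_image (hf.mono fun w hw => (hWA w hw).1), ← hS u hu, ← hT u hu]
        refine lt_of_eq_of_lt (Finset.sum_congr rfl fun w hw => ?_) hsum
        rw [hS w (hWA w hw).1, hT w (hWA w hw).1]
      · exact (hS v hv).le.trans' (hpos v hv ((hG _ hu _ hv).1 hadj) (mt (hmemW v hv).2 hvW))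
    have hA : (applyStep G' ⟨A.image f, S', T'⟩ (f u) (W.image f)).A =
        (applyStep G ⟨A, S, T⟩ u W).A.image f := by
      simp only [applyStep, ← hT u hu]
      split_ifs
      · rw [Finset.erase_eq, Finset.erase_eq, Finset.image_sdiff_of_injOn hf (by simpa using hu),
          Finset.image_singleton]
      · rfl
    have hsub := applyStep_A_subset G ⟨A, S, T⟩ u W
    refine .of_applyStep hl' (Finset.card_image_le.trans hW) (hA ▸ ih (hf.mono hsub)
      (fun a ha b hb => hG a (hsub ha) b (hsub hb)) (fun a ha => ?_) (fun a ha => ?_))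
    · simp only [applyStep, hG u hu a (hsub ha), hmemW a (hsub ha), hS a (hsub ha),
        Finset.mem_image_of_mem f (hsub ha), show a ∈ A from hsub ha]
    · simp only [applyStep, hf.eq_iff (hsub ha) hu, hT a (hsub ha), hT u hu]

theorem ST4DegOn.union (hA : ST4DegOn G A S T) (hB : ST4DegOn G B S T) (hAB : Disjoint A B)
    (hadj : ∀ a ∈ A, ∀ b ∈ B, ¬ G.Adj a b) : ST4DegOn G (A ∪ B) S T := by
  induction hA using ST4DegOn.induction with
  | of_empty => rwa [Finset.empty_union]
  | of_applyStep A S T u W hl hW _ ih =>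
    obtain ⟨hu, hWA, hsum, hpos⟩ := hl
    have huB : u ∉ B := Finset.disjoint_left.1 hAB hu
    have hsub := applyStep_A_subset G ⟨A, S, T⟩ u W
    have hl' : LegalStep G ⟨A ∪ B, S, T⟩ u W := by
      refine ⟨Finset.mem_union_left _ hu,
        fun w hw => ⟨Finset.mem_union_left _ (hWA w hw).1, (hWA w hw).2⟩, hsum, fun v hv huv => ?_⟩
      rcases Finset.mem_union.1 hv with hv | hv
      · exact hpos v hv huv
      · exact absurd huv (hadj u hu v hv)
    have hA' : (applyStep G ⟨A ∪ B, S, T⟩ u W).A = (applyStep G ⟨A, S, T⟩ u W).A ∪ B := by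
      simp only [applyStep]
      split_ifs
      · rw [Finset.erase_union_distrib, Finset.erase_eq_of_notMem huB]
      · rfl
    have hB' : ST4DegOn G B (applyStep G ⟨A, S, T⟩ u W).S (applyStep G ⟨A, S, T⟩ u W).T :=
      hB.congr (fun v hv => by simp [applyStep, hadj u hu v hv])
        (fun v hv => by simp [applyStep, ne_of_mem_of_not_mem hv huB])
    refine .of_applyStep hl' hW (hA' ▸ (ih hB' (hAB.mono_left hsub)
      fun a ha => hadj a (hsub ha)).congr (fun v hv => ?_) fun v _ => rfl)
    rcases Finset.mem_union.1 hv with hv | hv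
    · have hvA : v ∈ A := hsub hv
      simp [applyStep, hvA]
    · simp [applyStep, hadj u hu v hv]

theorem ST4DegOn.of_fibers {ι : Type*} (κ : V → ι)
    (hκ : ∀ a ∈ A, ∀ b ∈ A, G.Adj a b → κ a = κ b)
    (h : ∀ c ∈ A.image κ, ST4DegOn G (A.filter (κ · = c)) S T) : ST4DegOn G A S T := by
  suffices ∀ s ⊆ A.image κ, ST4DegOn G (A.filter (κ · ∈ s)) S T by
    rw [← Finset.filter_true_of_mem fun v (hv : v ∈ A) => Finset.mem_image_of_mem κ hv]
    exact this _ subset_rfl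
  intro s hs
  induction s using Finset.induction_on with
  | empty => simpa using ST4DegOn.of_empty G S T
  | insert c s hc ih =>
    rw [Finset.insert_subset_iff] at hs
    simp only [Finset.mem_insert, Finset.filter_or]
    refine (h c hs.1).union (ih hs.2) (Finset.disjoint_filter.2 fun v _ hv => hv ▸ hc) ?_
    simp only [Finset.mem_filter]
    rintro a ⟨haA, rfl⟩ b ⟨hbA, hb⟩ hab
    exact hc (hκ a haA b hbA hab ▸ hb)

/-- The shield `S` after `n` operations at `u` saving `W`. -/
def shade (G : SimpleGraph V) (u : V) (W : Finset V) (n : ℕ) (S : V → ℕ) : V → ℕ :=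
  fun v => if G.Adj u v ∧ v ∉ W then S v - n else S v

theorem shade_of_adj (h : G.Adj u v) (hv : v ∉ W) (n : ℕ) : shade G u W n S v = S v - n :=
  if_pos ⟨h, hv⟩

theorem shade_of_mem (hv : v ∈ W) (n : ℕ) : shade G u W n S v = S v :=
  if_neg fun h => h.2 hv

theorem shade_of_not_adj (h : ¬ G.Adj u v) (n : ℕ) : shade G u W n S v = S v :=
  if_neg fun h' => h h'.1

theorem shade_zero (G : SimpleGraph V) (u : V) (W : Finset V) (S : V → ℕ) :
    shade G u W 0 S = S := by
  ext v
  simp [shade]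

theorem shade_shade (m n : ℕ) : shade G u W m (shade G u W n S) = shade G u W (n + m) S := by
  ext v
  unfold shade
  split_ifs <;> omega

theorem ST4DegOn.of_shade_one (hl : LegalStep G ⟨A, S, T⟩ u W) (hW : W.card ≤ 1)
    (h : ST4DegOn G (if T u = 1 then A.erase u else A) (shade G u W 1 S)
      (Function.update T u (T u - 1))) : ST4DegOn G A S T := by
  refine .of_applyStep hl hW (h.congr (fun v hv => ?_) fun v hv => ?_)
  · have hvA : v ∈ A := applyStep_A_subset G ⟨A, S, T⟩ u W hv
    simp only [applyStep, shade, hvA, true_and]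
  · rcases eq_or_ne v u with rfl | hvu
    · have : T v ≠ 1 := fun h1 => by simp [h1] at hv
      simp only [applyStep, Function.update_self]
      grind
    · simp [applyStep, hvu]

theorem ST4DegOn.of_lower_target (n c : ℕ) (hu : u ∈ A) (hT : T u = c + n) (hc : 1 ≤ c)
    (hW : W.card ≤ 1) (hWA : ∀ w ∈ W, w ∈ A ∧ G.Adj u w)
    (hsum : ∑ w ∈ W, (S w + T w) ≤ S u + c) (hS : ∀ v ∈ A, G.Adj u v → v ∉ W → n ≤ S v)
    (h : ST4DegOn G A (shade G u W n S) (Function.update T u c)) : ST4DegOn G A S T := by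
  induction n generalizing S T with
  | zero =>
    rwa [shade_zero, ← add_zero c, ← hT, Function.update_eq_self] at h
  | succ n ih =>
    refine .of_shade_one ⟨hu, hWA, by dsimp only; omega,
      fun v hv huv hvW => le_of_add_le_right (hS v hv huv hvW)⟩ hW ?_
    rw [if_neg (by omega), hT]
    refine ih (Function.update_self ..) ?_ (fun v hv huv hvW => ?_) ?_
    · rw [shade_of_not_adj G.irrefl, Finset.sum_congr rfl fun w hw => by
        rw [shade_of_mem hw, Function.update_of_ne (hWA w hw).2.ne']]
      exact hsum
    · rw [shade_of_adj huv hvW]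
      exact Nat.le_sub_of_add_le (hS v hv huv hvW)
    · rwa [shade_shade, add_comm, Function.update_idem]

theorem ST4DegOn.of_spend_target [DecidableEq V] (hu : u ∈ A) (hT : 1 ≤ T u) (hW : W.card ≤ 1)
    (hWA : ∀ w ∈ W, w ∈ A ∧ G.Adj u w) (hsum : ∑ w ∈ W, (S w + T w) ≤ S u)
    (hS : ∀ v ∈ A, G.Adj u v → v ∉ W → T u ≤ S v)
    (h : ST4DegOn G (A.erase u) (shade G u W (T u) S) T) : ST4DegOn G A S T := by
  obtain rfl : ‹DecidableEq V› = fun a b => Classical.propDecidable (a = b) :=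
    Subsingleton.elim _ _
  refine .of_lower_target (T u - 1) 1 hu (by omega) le_rfl hW hWA (hsum.trans (Nat.le_succ _))
    (fun v hv huv hvW => (Nat.sub_le _ _).trans (hS v hv huv hvW)) ?_
  refine .of_shade_one ⟨hu, hWA, ?_, fun v hv huv hvW => ?_⟩ hW ?_
  · dsimp only
    rw [shade_of_not_adj G.irrefl, Function.update_self, Finset.sum_congr rfl fun w hw => by
      rw [shade_of_mem hw, Function.update_of_ne (hWA w hw).2.ne']]
    exact Nat.lt_succ_of_le hsum
  · have := hS v hv huv hvW
    simp only [shade_of_adj huv hvW]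
    omega
  · rw [Function.update_self, if_pos rfl, shade_shade, Nat.sub_add_cancel hT,
      Function.update_idem]
    exact h.congr (fun _ _ => rfl) fun v hv =>
      (Function.update_of_ne (Finset.ne_of_mem_erase hv) ..).symm

theorem ST4DegOn.of_erase [DecidableEq V] (hu : u ∈ A) (hT : 1 ≤ T u)
    (hS : ∀ v ∈ A, G.Adj u v → T u ≤ S v)
    (h : ST4DegOn G (A.erase u) (shade G u ∅ (T u) S) T) : ST4DegOn G A S T :=
  .of_spend_target hu hT (by simp) (by simp) (by simp) (fun v hv huv _ => hS v hv huv) h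

/-- The shield under which a graph with vertex set `A` and maximum degree at most `2` is cleared
with constant target `r`: it is `r + 1` at the inner vertices of a path, `1` at its ends, and, by
the truncation of the subtraction, `0` at an isolated vertex when `r ≥ 1`. -/
def pathShield (G : SimpleGraph V) (r : ℕ) (A : Finset V) (v : V) : ℕ :=
  r * (A.filter (G.Adj v)).card + 1 - r

theorem pathShield_erase_of_adj [DecidableEq V] (hu : u ∈ A) (huv : G.Adj u v) :
    pathShield G r (A.erase u) v = pathShield G r A v - r := by
  have hmem : u ∈ A.filter (G.Adj v) := Finset.mem_filter.2 ⟨hu, huv.symm⟩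
  rw [pathShield, pathShield, Finset.filter_erase, Finset.card_erase_of_mem hmem,
    Nat.mul_sub_one]
  have := Nat.le_mul_of_pos_right r (Finset.card_pos.2 ⟨u, hmem⟩)
  omega

theorem pathShield_erase_of_not_adj [DecidableEq V] (huv : ¬ G.Adj u v) :
    pathShield G r (A.erase u) v = pathShield G r A v := by
  have hmem : u ∉ A.filter (G.Adj v) := fun h => huv (Finset.mem_filter.1 h).2.symm
  rw [pathShield, pathShield, Finset.filter_erase, Finset.erase_eq_of_notMem hmem]

theorem le_pathShield_of_adj_of_adj {w w' : V} (hw : w ∈ A) (hw' : w' ∈ A) (hne : w ≠ w')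
    (h : G.Adj v w) (h' : G.Adj v w') : r + 1 ≤ pathShield G r A v := by
  have : 1 < (A.filter (G.Adj v)).card := Finset.one_lt_card.2
    ⟨w, Finset.mem_filter.2 ⟨hw, h⟩, w', Finset.mem_filter.2 ⟨hw', h'⟩, hne⟩
  have := Nat.mul_le_mul_left r this
  unfold pathShield
  omega

theorem one_le_pathShield {w : V} (hw : w ∈ A) (h : G.Adj v w) : 1 ≤ pathShield G r A v := by
  have : 0 < (A.filter (G.Adj v)).card := Finset.card_pos.2 ⟨w, Finset.mem_filter.2 ⟨hw, h⟩⟩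
  have := Nat.le_mul_of_pos_right r this
  unfold pathShield
  omega

theorem pathShield_le_pathShield_apply {V' : Type} {G' : SimpleGraph V'} {A' : Finset V'}
    {f : V → V'} (hf : Set.InjOn f A) (hA : ∀ a ∈ A, f a ∈ A')
    (hG : ∀ a ∈ A, G.Adj v a → G'.Adj (f v) (f a)) :
    pathShield G r A v ≤ pathShield G' r A' (f v) := by
  have : (A.filter (G.Adj v)).card ≤ (A'.filter (G'.Adj (f v))).card :=
    Finset.card_le_card_of_injOn f
      (fun a ha => by
        obtain ⟨ha, hva⟩ := Finset.mem_filter.1 ha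
        exact Finset.mem_filter.2 ⟨hA a ha, hG a ha hva⟩)
      (hf.mono (Finset.filter_subset _ _))
  have := Nat.mul_le_mul_left r this
  unfold pathShield
  omega

theorem ST4DegOn.union_of_indep [DecidableEq V] {X : Finset V} (hr : 1 ≤ r) (hX : G.IsIndepSet X)
    (hXB : Disjoint X B) (hB : 2 ≤ r → ∀ v ∈ B, ∃ w ∈ B, G.Adj v w)
    (hS : ∀ v ∈ B, pathShield G r (X ∪ B) v ≤ S v)
    (h : ST4DegOn G B (pathShield G r B) fun _ => r) : ST4DegOn G (X ∪ B) S fun _ => r := by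
  induction X using Finset.induction_on generalizing S with
  | empty =>
    rw [Finset.empty_union] at hS ⊢
    exact h.mono hS fun _ _ => rfl
  | insert x X hx ih =>
    rw [Finset.disjoint_insert_left] at hXB
    have hxmem : x ∈ insert x X ∪ B := by simp
    have hxB : ∀ v ∈ B, v ≠ x := fun v hv => ne_of_mem_of_not_mem hv hXB.1
    have hadj : ∀ v ∈ insert x X ∪ B, G.Adj x v → v ∈ B := fun v hv hxv =>
      (Finset.mem_union.1 hv).resolve_left fun hvX =>
        hX (by simp) (by simpa using hvX) hxv.ne hxv
    have herase : (insert x X ∪ B).erase x = X ∪ B := by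
      rw [Finset.erase_union_distrib, Finset.erase_insert hx, Finset.erase_eq_of_notMem hXB.1]
    refine .of_erase hxmem hr (fun v hv hxv => (hS v (hadj v hv hxv)).trans' ?_) ?_
    · obtain hr2 | hr1 := le_or_gt 2 r
      · obtain ⟨w, hw, hvw⟩ := hB hr2 v (hadj v hv hxv)
        exact Nat.le_of_succ_le (le_pathShield_of_adj_of_adj hxmem (Finset.mem_union_right _ hw)
          (hxB w hw).symm hxv.symm hvw)
      · exact (Nat.le_of_lt_succ hr1).trans (one_le_pathShield hxmem hxv.symm)
    · rw [herase]
      refine ih (Set.Pairwise.mono (by simp) hX) hXB.2 fun v hv => ?_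
      rw [← herase]
      by_cases hxv : G.Adj x v
      · rw [pathShield_erase_of_adj hxmem hxv, shade_of_adj hxv (Finset.notMem_empty v)]
        exact Nat.sub_le_sub_right (hS v hv) r
      · rw [pathShield_erase_of_not_adj hxv, shade_of_not_adj hxv]
        exact hS v hv

/-- The outward sweep along the path `0, 1, …, 2k` with target `k + 1`, after the odd vertices
`1, 3, …, 2j - 1` have acted: vertex `2i + 1` has acted `k - i` times, saving `2i` and shading
`2i + 2`. -/
def outwardState (k j : ℕ) : State ℕ where
  A := Finset.range (2 * k + 1)
  S n := if n % 2 = 1 then k + 2 else if n = 2 * k then if j < k then 1 else 0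
    else if n / 2 ≤ j then n / 2 + 1 else k + 2
  T n := if n % 2 = 1 ∧ n / 2 < j then n / 2 + 1 else k + 1

/-- The return sweep along the path `0, 1, …, 2k` with target `k + 1`, when the odd vertices
`1, 3, …, 2j - 1` are still there: vertex `2i + 1` acts its remaining `i + 1` times, saving `2i + 2`
and shading `2i`. -/
def returnState (k j : ℕ) : State ℕ where
  A := {n ∈ Finset.range (2 * k + 1) | n % 2 = 0 ∨ n < 2 * j}
  S n := if n % 2 = 1 then k + 2 else if n < 2 * j then n / 2 + 1 else 0
  T n := if n % 2 = 1 then n / 2 + 1 else k + 1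

theorem hasse_nat_adj {m n : ℕ} : (SimpleGraph.hasse ℕ).Adj m n ↔ m + 1 = n ∨ n + 1 = m := by
  simp only [SimpleGraph.hasse_adj, Nat.covBy_iff_add_one_eq]

theorem st4DegOn_returnState (k j : ℕ) (hj : j ≤ k) :
    ST4DegOn (SimpleGraph.hasse ℕ) (returnState k j).A (returnState k j).S (returnState k j).T := by
  induction j with
  | zero =>
    have hA : ∀ n ∈ (returnState k 0).A, n % 2 = 0 := fun n hn => by
      simpa using (Finset.mem_filter.1 hn).2
    have hindep : (SimpleGraph.hasse ℕ).IsIndepSet (returnState k 0).A := fun m hm n hn _ hmn => by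
      have := hA m hm
      have := hA n hn
      rw [hasse_nat_adj] at hmn
      omega
    have hclear := ST4DegOn.union_of_indep (B := ∅) (S := (returnState k 0).S) (Nat.le_add_left 1 k)
      hindep (Finset.disjoint_empty_right _) (by simp) (by simp) (.of_empty ..)
    rw [Finset.union_empty] at hclear
    exact hclear.congr (fun _ _ => rfl) fun n hn => by simp [returnState, hA n hn]
  | succ j ih =>
    have hA : (returnState k (j + 1)).A.erase (2 * j + 1) = (returnState k j).A := by
      grind [returnState]
    refine .of_spend_target (u := 2 * j + 1) (W := {2 * j + 2})
      ?active ?target (Finset.card_singleton _).le ?saved ?sum ?shaded ?next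
    case active => grind [returnState]
    case target => grind [returnState]
    case saved => grind [returnState, hasse_nat_adj]
    case sum =>
      rw [Finset.sum_singleton]
      grind [returnState]
    case shaded => grind [returnState, hasse_nat_adj]
    case next =>
      rw [hA]
      refine (ih (by omega)).congr (fun n hn => ?_) fun _ _ => rfl
      grind [returnState, shade, hasse_nat_adj]

theorem st4DegOn_outwardState (k j : ℕ) (hj : j ≤ k) :
    ST4DegOn (SimpleGraph.hasse ℕ) (outwardState k j).A (outwardState k j).S
      (outwardState k j).T := by
  induction hj using Nat.decreasingInduction with
  | self =>
    have hA : (outwardState k k).A = (returnState k k).A := by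
      grind [outwardState, returnState]
    rw [hA]
    refine (st4DegOn_returnState k k le_rfl).congr (fun n hn => ?_) fun n hn => ?_ <;>
      grind [outwardState, returnState]
  | of_succ j hj ih =>
    refine .of_lower_target (u := 2 * j + 1) (W := {2 * j}) (k - j) (j + 1)
      ?active ?target (Nat.le_add_left 1 j) (Finset.card_singleton _).le ?saved ?sum ?shaded ?next
    case active => grind [outwardState]
    case target => grind [outwardState]
    case saved => grind [outwardState, hasse_nat_adj]
    case sum =>
      rw [Finset.sum_singleton]
      grind [outwardState]
    case shaded => grind [outwardState, hasse_nat_adj]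
    case next =>
      refine ih.congr (fun n hn => ?_) fun n _ => ?_
      · grind [outwardState, shade, hasse_nat_adj]
      · grind [outwardState, Function.update]

theorem outwardState_zero_le_pathShield (k : ℕ) {n : ℕ} (hn : n < 2 * k + 1) :
    (outwardState k 0).S n ≤
      pathShield (SimpleGraph.hasse ℕ) (k + 1) (Finset.range (2 * k + 1)) n := by
  have hend : n = 0 ∨ n = 2 * k → (outwardState k 0).S n ≤ 1 := by grind [outwardState]
  have hsingle : k = 0 → (outwardState k 0).S n = 0 := by grind [outwardState]
  have hinner : (outwardState k 0).S n ≤ k + 2 := by grind [outwardState]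
  by_cases hprev : 1 ≤ n <;> by_cases hnext : n + 1 < 2 * k + 1
  · refine hinner.trans (le_pathShield_of_adj_of_adj (w := n - 1) (w' := n + 1)
      (Finset.mem_range.2 (by omega)) (Finset.mem_range.2 hnext) (by omega) ?_ ?_) <;>
    · rw [hasse_nat_adj]
      omega
  · exact (hend (by omega)).trans (one_le_pathShield (w := n - 1)
      (Finset.mem_range.2 (by omega)) (hasse_nat_adj.2 (by omega)))
  · exact (hend (by omega)).trans (one_le_pathShield (w := n + 1)
      (Finset.mem_range.2 hnext) (hasse_nat_adj.2 (by omega)))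
  · rw [hsingle (by omega)]
    exact Nat.zero_le _

theorem st4DegOn_range (hr : 1 ≤ r) {m : ℕ} (hm : 2 * r - 1 ≤ m) :
    ST4DegOn (SimpleGraph.hasse ℕ) (Finset.range m)
      (pathShield (SimpleGraph.hasse ℕ) r (Finset.range m)) fun _ => r := by
  induction m, hm using Nat.le_induction with
  | base =>
    obtain ⟨k, rfl⟩ := Nat.exists_eq_add_of_le' hr
    exact (st4DegOn_outwardState k 0 k.zero_le).mono
      (fun n hn => outwardState_zero_le_pathShield k (Finset.mem_range.1 hn))
      fun n _ => by simp [outwardState]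
  | succ m hm ih =>
    rw [Finset.range_add_one, Finset.insert_eq]
    refine .union_of_indep hr (by simp) (by simp) (fun hr2 n hn => ?_)
      (fun _ _ => le_rfl) ih
    rw [Finset.mem_range] at hn
    obtain hnext | hlast := lt_or_ge (n + 1) m
    · exact ⟨n + 1, Finset.mem_range.2 hnext, hasse_nat_adj.2 (.inl rfl)⟩
    · exact ⟨n - 1, Finset.mem_range.2 (by omega), hasse_nat_adj.2 (by omega)⟩

theorem degree_le_two [Fintype V]
    (h : ∀ a b c, a ≠ b → a ≠ c → b ≠ c → G.Adj v a → G.Adj v b → ¬ G.Adj v c) :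
    G.degree v ≤ 2 := by
  rw [← SimpleGraph.card_neighborFinset_eq_degree]
  by_contra! hlt
  obtain ⟨a, b, c, ha, hb, hc, hab, hac, hbc⟩ := Finset.two_lt_card_iff.1 hlt
  rw [SimpleGraph.mem_neighborFinset] at ha hb hc
  exact h a b c hab hac hbc ha hb hc

theorem pathShield_univ_le [Fintype V] (h : G.degree v ≤ 2) :
    pathShield G r Finset.univ v ≤ r + 1 := by
  have hcard : (Finset.univ.filter (G.Adj v)).card = G.degree v := by
    rw [← SimpleGraph.card_neighborFinset_eq_degree]
    congr 1
    ext w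
    simp
  have := Nat.mul_le_mul_left r (hcard.trans_le h)
  unfold pathShield
  omega

theorem exists_adj_of_one_lt_ncard_supp (h : 1 < (G.connectedComponentMk v).supp.ncard) :
    ∃ w, G.Adj v w := by
  obtain ⟨w, hw, hne⟩ := Set.exists_ne_of_one_lt_ncard h v
  rw [SimpleGraph.ConnectedComponent.mem_supp_iff, SimpleGraph.ConnectedComponent.eq] at hw
  exact SimpleGraph.mem_support_of_reachable hne.symm hw.symm

theorem mem_support_of_adj_of_forall_length_le [Fintype V] (hdeg : ∀ v, G.degree v ≤ 2) {a b : V}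
    {p : G.Walk a b} (hp : p.IsPath)
    (hmax : ∀ (a' b' : V) (q : G.Walk a' b'), q.IsPath → q.length ≤ p.length)
    (hv : v ∈ p.support) {w : V} (hvw : G.Adj v w) : w ∈ p.support := by
  by_contra hw
  have hstart : v ≠ a := by
    rintro rfl
    simpa using hmax _ _ _ (hp.cons hw (h := hvw.symm))
  have hend : v ≠ b := by
    rintro rfl
    simpa using hmax _ _ _ (hp.concat hw hvw)
  obtain ⟨i, rfl, hi⟩ := SimpleGraph.Walk.mem_support_iff_exists_getVert.1 hv
  have hi0 : i ≠ 0 := fun h => hstart (by simp [h])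
  have hilast : i ≠ p.length := fun h => hend (by simp [h])
  have hnext := p.adj_getVert_succ (hi.lt_of_ne hilast)
  have hprev := p.adj_getVert_succ (i := i - 1) (by omega)
  rw [Nat.sub_add_cancel (Nat.one_le_iff_ne_zero.2 hi0)] at hprev
  have hne : p.getVert (i - 1) ≠ p.getVert (i + 1) := fun h => by
    have := hp.getVert_injOn (show i - 1 ≤ p.length by omega)
      (show i + 1 ≤ p.length by omega) h
    omega
  refine (hdeg (p.getVert i)).not_gt ?_
  rw [← SimpleGraph.card_neighborFinset_eq_degree, Finset.two_lt_card_iff]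
  refine ⟨p.getVert (i - 1), p.getVert (i + 1), w, ?_, ?_, ?_, hne, ?_, ?_⟩
  · simpa using hprev.symm
  · simpa using hnext
  · simpa using hvw
  · rintro rfl
    exact hw (p.getVert_mem_support _)
  · rintro rfl
    exact hw (p.getVert_mem_support _)

theorem exists_isHamiltonian_of_degree_le_two [Fintype V] (hG : G.Connected)
    (hdeg : ∀ v, G.degree v ≤ 2) : ∃ (a b : V) (p : G.Walk a b), p.IsHamiltonian := by
  have := hG.nonempty
  obtain ⟨a, b, p, hp, hmax⟩ := SimpleGraph.Walk.exists_isPath_forall_isPath_length_le_length G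
  refine ⟨a, b, p, hp.isHamiltonian_of_mem fun w => ?_⟩
  by_contra hw
  obtain ⟨q⟩ := hG.preconnected a w
  obtain ⟨d, -, hfst, hsnd⟩ := q.exists_boundary_dart {v | v ∈ p.support} p.start_mem_support hw
  exact hsnd (mem_support_of_adj_of_forall_length_le hdeg hp hmax hfst d.adj)

theorem adj_getVert_getVert_iff (hG : G.IsAcyclic) {a b : V} {p : G.Walk a b} (hp : p.IsPath)
    {i j : ℕ} (hi : i ≤ p.length) (hj : j ≤ p.length) :
    G.Adj (p.getVert i) (p.getVert j) ↔ (SimpleGraph.hasse ℕ).Adj i j := by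
  have hlt : ∀ {i j : ℕ}, i < j → j ≤ p.length → G.Adj (p.getVert i) (p.getVert j) →
      i + 1 = j := fun {i j} hij hj hadj => by
    have hmem : p.getVert j ∈ (p.drop i).support := by
      rw [← Nat.add_sub_cancel' hij.le, ← SimpleGraph.Walk.drop_getVert]
      exact SimpleGraph.Walk.getVert_mem_support _ _
    have hsnd := hG.eq_snd_of_adj_start (hp.drop i) hadj hmem
    rw [SimpleGraph.Walk.snd, SimpleGraph.Walk.drop_getVert] at hsnd
    exact (hp.getVert_injOn hj (Nat.succ_le_of_lt (hij.trans_le hj)) hsnd).symm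
  rw [hasse_nat_adj]
  constructor
  · intro hadj
    rcases lt_trichotomy i j with hij | rfl | hij
    · exact .inl (hlt hij hj hadj)
    · exact absurd hadj G.irrefl
    · exact .inr (hlt hij hi hadj.symm)
  · rintro (rfl | rfl)
    · exact p.adj_getVert_succ hj
    · exact (p.adj_getVert_succ hi).symm

theorem st4Deg_of_isTree [Fintype V] (hr : 1 ≤ r) (hG : G.IsTree) (hdeg : ∀ v, G.degree v ≤ 2)
    (hcard : 2 * r - 1 ≤ Fintype.card V) :
    ST4Deg G (pathShield G r Finset.univ) fun _ => r := by
  obtain ⟨a, b, p, hp⟩ := exists_isHamiltonian_of_degree_le_two hG.connected hdeg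
  have := hG.connected.nonempty
  have hlength : p.length + 1 = Fintype.card V := by
    rw [hp.length_eq, Nat.sub_add_cancel Fintype.card_pos]
  have hrange : ∀ i ∈ Finset.range (Fintype.card V), i ≤ p.length := fun i hi => by
    rw [Finset.mem_range] at hi
    omega
  have hinj : Set.InjOn p.getVert (Finset.range (Fintype.card V)) :=
    hp.isPath.getVert_injOn.mono hrange
  have hadj : ∀ i ∈ Finset.range (Fintype.card V), ∀ j ∈ Finset.range (Fintype.card V),
      G.Adj (p.getVert i) (p.getVert j) ↔ (SimpleGraph.hasse ℕ).Adj i j := fun i hi j hj =>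
    adj_getVert_getVert_iff hG.isAcyclic hp.isPath (hrange i hi) (hrange j hj)
  have huniv : (Finset.range (Fintype.card V)).image p.getVert = Finset.univ := by
    refine Finset.eq_univ_of_card _ ?_
    rw [Finset.card_image_of_injOn hinj, Finset.card_range]
  have hle : ∀ i ∈ Finset.range (Fintype.card V),
      pathShield (SimpleGraph.hasse ℕ) r (Finset.range (Fintype.card V)) i ≤
        pathShield G r Finset.univ (p.getVert i) := fun i hi =>
    pathShield_le_pathShield_apply hinj (fun _ _ => Finset.mem_univ _)
      fun j hj hij => (hadj i hi j hj).2 hij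
  rw [ST4Deg, ← huniv]
  exact ((st4DegOn_range hr hcard).mono (huniv ▸ hle) fun _ _ => rfl).image hinj hadj
    (fun _ _ => rfl) fun _ _ => rfl

theorem ST4DegOn.of_induce {s : Set V} [Fintype s] (hA : ∀ v, v ∈ A ↔ v ∈ s)
    (h : ST4Deg (G.induce s) (pathShield (G.induce s) r Finset.univ) fun _ => r) :
    ST4DegOn G A (pathShield G r A) fun _ => r := by
  have himage : Finset.univ.image ((↑) : s → V) = A := by
    ext v
    simp [hA]
  have hle : ∀ v ∈ Finset.univ, pathShield (G.induce s) r Finset.univ v ≤ pathShield G r A v :=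
    fun v _ => pathShield_le_pathShield_apply Subtype.val_injective.injOn
      (fun w _ => (hA w).2 w.2) fun w _ hvw => hvw
  rw [← himage]
  exact (ST4DegOn.mono h (himage ▸ hle) fun _ _ => rfl).image Subtype.val_injective.injOn
    (fun _ _ _ _ => Iff.rfl) (fun _ _ => rfl) fun _ _ => rfl

theorem st4Deg_of_isAcyclic [Fintype V] (hr : 1 ≤ r) (hG : G.IsAcyclic)
    (hdeg : ∀ v, G.degree v ≤ 2)
    (hcomp : ∀ v, 2 * r - 1 ≤ (G.connectedComponentMk v).supp.ncard) :
    ST4Deg G (pathShield G r Finset.univ) fun _ => r := by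
  refine .of_fibers G.connectedComponentMk
    (fun a _ b _ hab => SimpleGraph.ConnectedComponent.sound hab.reachable) fun c hc => ?_
  obtain ⟨v, -, rfl⟩ := Finset.mem_image.1 hc
  set s := (G.connectedComponentMk v).supp
  have htree : ST4Deg (G.induce s) (pathShield (G.induce s) r Finset.univ) fun _ => r := by
    refine st4Deg_of_isTree hr (hG.isTree_connectedComponent _)
      (fun w => ((SimpleGraph.Embedding.induce s).toCopy.degree_le w).trans (hdeg w)) ?_
    rw [← Nat.card_eq_fintype_card]
    exact hcomp v
  refine (ST4DegOn.of_induce (fun w => by simp [s]) htree).mono (fun w _ => ?_) fun _ _ => rfl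
  exact pathShield_le_pathShield_apply (f := id) (Function.injective_id.injOn)
    (fun _ _ => Finset.mem_univ _) fun _ _ hvw => hvw

theorem ST4Deg.st4Star_le [Fintype V] {s t : ℕ} (ht : 1 ≤ t)
    (h : ST4Deg G (fun _ => s) fun _ => t) : ST4Star G ≤ ((s : ℝ) + t) / t := by
  refine csInf_le ⟨0, ?_⟩ ⟨s, t, ht, h, rfl⟩
  rintro _ ⟨s, t, -, -, rfl⟩
  positivity

/-- Suppose `G` is a graph and `X` is an independent set of vertices of `G`
containing every vertex of degree at least `3` (having three distinct neighbors), such that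
`G − X` is a linear forest (acyclic with maximum degree at most `2`, i.e. a disjoint union of
paths, possibly empty) and the order of each component of `G − X` is at least `2r−1` for some
`r ∈ ℕ` (so `r ≥ 1`).  Then `G` is `ST⁽⁴⁾`-`(r+1, r)`-degenerate; consequently
`ST⁽⁴⁾*(G) ≤ 2 + 1/r`. -/
theorem st4Deg_of_independent_linear_forest {V : Type} [Fintype V] (G : SimpleGraph V)
    (X : Finset V) (r : ℕ) (hr : 1 ≤ r)
    (hXindep : ∀ x ∈ X, ∀ y ∈ X, ¬ G.Adj x y)
    (hXdeg : ∀ v : V, (∃ a b c : V, a ≠ b ∧ a ≠ c ∧ b ≠ c ∧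
        G.Adj v a ∧ G.Adj v b ∧ G.Adj v c) → v ∈ X)
    (hacyclic : (G.induce {v : V | v ∉ X}).IsAcyclic)
    (hmaxdeg : ∀ v a b c : {v : V | v ∉ X}, a ≠ b → a ≠ c → b ≠ c →
        (G.induce {v : V | v ∉ X}).Adj v a → (G.induce {v : V | v ∉ X}).Adj v b →
        ¬ (G.induce {v : V | v ∉ X}).Adj v c)
    (hcomp : ∀ v : {v : V | v ∉ X},
        2 * r - 1 ≤ ((G.induce {v : V | v ∉ X}).connectedComponentMk v).supp.ncard) :
    ST4Deg G (fun _ => r + 1) (fun _ => r) ∧ ST4Star G ≤ 2 + 1 / (r : ℝ) := by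
  have hforest : ST4DegOn G Xᶜ (pathShield G r Xᶜ) fun _ => r :=
    .of_induce (fun v => Finset.mem_compl) <| st4Deg_of_isAcyclic hr hacyclic
      (fun v => degree_le_two (hmaxdeg v)) hcomp
  have hneighbor : 2 ≤ r → ∀ v ∈ Xᶜ, ∃ w ∈ Xᶜ, G.Adj v w := fun hr2 v hv => by
    obtain ⟨w, hvw⟩ := exists_adj_of_one_lt_ncard_supp
      ((by omega : 1 < 2 * r - 1).trans_le (hcomp ⟨v, Finset.mem_compl.1 hv⟩))
    exact ⟨w, Finset.mem_compl.2 w.2, hvw⟩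
  have hshield : ∀ v ∈ Xᶜ, pathShield G r (X ∪ Xᶜ) v ≤ r + 1 := fun v hv => by
    rw [Finset.union_compl]
    exact pathShield_univ_le <| degree_le_two fun a b c hab hac hbc ha hb hc =>
      Finset.mem_compl.1 hv (hXdeg v ⟨a, b, c, hab, hac, hbc, ha, hb, hc⟩)
  have hdeg : ST4Deg G (fun _ => r + 1) fun _ => r := by
    rw [ST4Deg, ← Finset.union_compl X]
    exact .union_of_indep hr (fun x hx y hy _ => hXindep x hx y hy) disjoint_compl_right
      hneighbor hshield hforest
  refine ⟨hdeg, (hdeg.st4Star_le hr).trans_eq ?_⟩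
  have : (r : ℝ) ≠ 0 := Nat.cast_ne_zero.2 (Nat.one_le_iff_ne_zero.1 hr)
  push_cast
  field_simp
  ring

end StrictDeg
end
end
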